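/- Let h : ℝ → ℝ be thrice differentiable with h', h''' ∈ L¹(ℝ), vanishing at infinity, and ĥ' ∈ L¹(ℝ). Then C_h := (1/√(2π)) ∫_ℝ |ĥ'(ω)| dω ≤ (2√2/√π) · √(‖h'‖₁ ‖h'''‖₁). -/

import Mathlib

/-!
Rescaling the frequency turns the left-hand side into `∫ ‖𝓕 f‖` for `f = h'` and Mathlib's
normalization of `𝓕`. Put `A = ‖f‖₁` and `B = ‖f''‖₁`. The trivial bound on a Fourier transform,
applied to `f` and to `f''`, gives `‖𝓕 f ξ‖ ≤ A` and `ξ² ‖𝓕 f ξ‖ ≤ B / (2π)²`. Using the first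
bound for `|ξ| ≤ t` and the second one for `|ξ| > t`, the integral is at most
`2 (A t + B / ((2π)² t))`, and the optimal `t` yields `(2 / π) √(A B)`.

The identity `𝓕 f'' ξ = (2πiξ)² 𝓕 f ξ` behind the second bound rests on `f' ∈ L¹`, which holds
because Taylor's formula bounds `‖f' x‖` by `‖f (x + 1)‖ + ‖f x‖ + ∫ t in x..x + 1, ‖f'' t‖`.
-/

open MeasureTheory

/-- Fourier transform with the symmetric `1/√(2π)` normalization. -/
noncomputable def FT (g : ℝ → ℝ) (ω : ℝ) : ℂ :=
  (Real.sqrt (2 * Real.pi) : ℂ)⁻¹ * ∫ x : ℝ, (g x : ℂ) * Complex.exp (-(Complex.I * ω * x))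

open Set Filter Real
open scoped FourierTransform Topology

section IntegrableDeriv

theorem integrable_integral_comp_add {G E : Type*} [AddGroup G] [MeasurableSpace G]
    [MeasurableAdd₂ G] [NormedAddCommGroup E] [NormedSpace ℝ E] {μ ν : Measure G} [SFinite μ]
    [μ.IsAddLeftInvariant] [IsFiniteMeasure ν] {f : G → E} (hf : Integrable f μ) :
    Integrable (fun x ↦ ∫ t, f (t + x) ∂ν) μ :=
  ((measurePreserving_prod_add ν μ).integrable_comp_of_integrable
    (hf.comp_snd ν)).integral_prod_right

variable {E : Type*} [NormedAddCommGroup E] [NormedSpace ℝ E] {f f' f'' : ℝ → E}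

theorem integrable_intervalIntegral_add_const (hf : Integrable f) (c : ℝ) :
    Integrable (fun x ↦ ∫ t in x..x + c, f t) := by
  have hshift (x : ℝ) : ∫ t in x..x + c, f t = ∫ t in (0)..c, f (t + x) := by
    rw [intervalIntegral.integral_comp_add_right, zero_add, add_comm c]
  simp_rw [hshift, intervalIntegral]
  exact (integrable_integral_comp_add hf).sub (integrable_integral_comp_add hf)

theorem norm_sub_sub_smul_le_mul_integral_norm {a b : ℝ} (hab : a ≤ b)
    (hf : ∀ x, HasDerivAt f (f' x) x) (hf' : ∀ x, HasDerivAt f' (f'' x) x)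
    (hf'' : IntervalIntegrable f'' volume a b) :
    ‖f b - f a - (b - a) • f' a‖ ≤ (b - a) * ∫ t in a..b, ‖f'' t‖ := by
  have hvar : ∀ x ∈ Icc a b, ‖f' x - f' a‖ ≤ ∫ t in a..b, ‖f'' t‖ := fun x hx ↦ calc
    ‖f' x - f' a‖ ≤ ∫ t in a..x, ‖f'' t‖ :=
      norm_sub_le_integral_of_norm_deriv_le_of_le hx.1
        (fun y _ ↦ (hf' y).continuousAt.continuousWithinAt)
        (fun y _ ↦ (hf' y).differentiableAt.differentiableWithinAt)
        (.of_forall fun y _ ↦ (congrArg norm (hf' y).deriv).le)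
        (hf''.norm.mono_set (uIcc_subset_uIcc_left (Icc_subset_uIcc hx)))
    _ ≤ ∫ t in a..b, ‖f'' t‖ :=
      intervalIntegral.integral_mono_interval le_rfl hx.1 hx.2
        (.of_forall fun t ↦ norm_nonneg (f'' t)) hf''.norm
  have hremainder (x : ℝ) :
      HasDerivAt (fun y ↦ f y - (y - a) • f' a) (f' x - f' a) x := by
    simpa using (hf x).fun_sub (((hasDerivAt_id x).sub_const a).smul_const (f' a))
  have hmv := norm_image_sub_le_of_norm_deriv_le_segment'
    (fun x _ ↦ (hremainder x).hasDerivWithinAt) (fun x hx ↦ hvar x (Ico_subset_Icc_self hx))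
    b (right_mem_Icc.2 hab)
  rwa [sub_self, zero_smul, sub_zero, sub_right_comm, mul_comm] at hmv

theorem integrable_deriv_of_integrable_deriv_deriv (hd : ∀ x, HasDerivAt f (f' x) x)
    (hd' : ∀ x, HasDerivAt f' (f'' x) x) (hf : Integrable f) (hf'' : Integrable f'') :
    Integrable f' := by
  have hcont : Continuous f' := continuous_iff_continuousAt.2 fun x ↦ (hd' x).continuousAt
  refine (((hf.comp_add_right 1).norm.add hf.norm).add
    (integrable_intervalIntegral_add_const hf''.norm 1)).mono' hcont.aestronglyMeasurable
    (.of_forall fun x ↦ ?_)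
  have htaylor := norm_sub_sub_smul_le_mul_integral_norm (le_add_of_nonneg_right zero_le_one)
    hd hd' (hf''.intervalIntegrable (a := x) (b := x + 1))
  rw [add_sub_cancel_left, one_smul, one_mul] at htaylor
  calc ‖f' x‖ ≤ ‖f (x + 1) - f x‖ + ‖f (x + 1) - f x - f' x‖ := norm_le_norm_add_norm_sub _ _
    _ ≤ ‖f (x + 1)‖ + ‖f x‖ + ∫ t in x..x + 1, ‖f'' t‖ :=
      add_le_add (norm_sub_le _ _) htaylor

end IntegrableDeriv

section Split

variable {u : ℝ → ℝ} {A B : ℝ}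

theorem integrable_of_norm_le_of_sq_mul_norm_le {E : Type*} [NormedAddCommGroup E] {g : ℝ → E}
    (hg : AEStronglyMeasurable g) (hA : ∀ x, ‖g x‖ ≤ A) (hB : ∀ x, x ^ 2 * ‖g x‖ ≤ B) :
    Integrable g := by
  refine (integrable_inv_one_add_sq.const_mul (A + B)).mono' hg (.of_forall fun x ↦ ?_)
  rw [← div_eq_mul_inv, le_div_iff₀ (by positivity)]
  linarith [hA x, hB x]

theorem setIntegral_Ioi_le_mul_add_div (hu : IntegrableOn u (Ioi 0)) (hA : ∀ x > 0, u x ≤ A)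
    (hB : ∀ x > 0, x ^ 2 * u x ≤ B) {t : ℝ} (ht : 0 < t) :
    ∫ x in Ioi 0, u x ≤ A * t + B / t := by
  have hlow : IntegrableOn u (Ioc 0 t) := hu.mono_set Ioc_subset_Ioi_self
  have hhigh : IntegrableOn u (Ioi t) := hu.mono_set (Ioi_subset_Ioi ht.le)
  rw [← Ioc_union_Ioi_eq_Ioi ht.le,
    setIntegral_union Ioc_disjoint_Ioi_same measurableSet_Ioi hlow hhigh]
  refine add_le_add ?_ ?_
  · calc ∫ x in Ioc 0 t, u x ≤ ∫ _ in Ioc 0 t, A :=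
        setIntegral_mono_on hlow (by simp) measurableSet_Ioc fun x hx ↦ hA x hx.1
      _ = A * t := by simp [ht.le, mul_comm]
  · calc ∫ x in Ioi t, u x ≤ ∫ x in Ioi t, B * x ^ (-2 : ℝ) := by
          refine setIntegral_mono_on hhigh
            ((integrableOn_Ioi_rpow_of_lt (by norm_num) ht).const_mul B) measurableSet_Ioi
            fun x hx ↦ ?_
          have hx₀ : 0 < x := ht.trans hx
          rw [rpow_neg hx₀.le, rpow_two, ← div_eq_mul_inv, le_div_iff₀' (by positivity)]
          exact hB x hx₀
      _ = B / t := by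
          rw [integral_const_mul, integral_Ioi_rpow_of_lt (by norm_num) ht]
          norm_num [rpow_neg_one, div_eq_mul_inv]

theorem integral_le_two_mul_mul_add_div (hu : Integrable u) (hA : ∀ x, u x ≤ A)
    (hB : ∀ x, x ^ 2 * u x ≤ B) {t : ℝ} (ht : 0 < t) :
    ∫ x, u x ≤ 2 * (A * t + B / t) := by
  have hneg : ∫ x in Iic 0, u x = ∫ x in Ioi 0, u (-x) := by
    rw [integral_comp_neg_Ioi, neg_zero]
  rw [← intervalIntegral.integral_Iic_add_Ioi hu.integrableOn hu.integrableOn, hneg, two_mul]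
  exact add_le_add
    (setIntegral_Ioi_le_mul_add_div hu.comp_neg.integrableOn (fun x _ ↦ hA (-x))
      (fun x _ ↦ by simpa only [neg_sq] using hB (-x)) ht)
    (setIntegral_Ioi_le_mul_add_div hu.integrableOn (fun x _ ↦ hA x) (fun x _ ↦ hB x) ht)

theorem le_two_mul_sqrt_of_forall_le_mul_add_div {c : ℝ} (hA : 0 ≤ A) (hB : 0 ≤ B)
    (hc : ∀ t > 0, c ≤ A * t + B / t) : c ≤ 2 * √(A * B) := by
  -- The minimizer `√(B / A)` degenerates when `A` or `B` vanishes, so both are first enlarged.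
  have hpos : ∀ ε > 0, c ≤ 2 * √((A + ε) * (B + ε)) := by
    intro ε hε
    calc c ≤ A * (√(B + ε) / √(A + ε)) + B / (√(B + ε) / √(A + ε)) := hc _ (by positivity)
      _ ≤ √(A + ε) ^ 2 * (√(B + ε) / √(A + ε)) + √(B + ε) ^ 2 / (√(B + ε) / √(A + ε)) := by
        rw [sq_sqrt (by positivity), sq_sqrt (by positivity)]
        gcongr <;> exact le_add_of_nonneg_right hε.le
      _ = 2 * √((A + ε) * (B + ε)) := by
        rw [sqrt_mul (by positivity)]
        field_simp
        ring
  have hlim : Tendsto (fun ε ↦ 2 * √((A + ε) * (B + ε))) (𝓝[>] 0) (𝓝 (2 * √(A * B))) :=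
    (Continuous.tendsto' (by fun_prop) 0 _ (by simp)).mono_left nhdsWithin_le_nhds
  exact ge_of_tendsto hlim (eventually_mem_nhdsWithin.mono hpos)

theorem integral_le_four_mul_sqrt (hu : Integrable u) (hA₀ : 0 ≤ A) (hA : ∀ x, u x ≤ A)
    (hB : ∀ x, x ^ 2 * u x ≤ B) : ∫ x, u x ≤ 4 * √(A * B) := by
  have hB₀ : 0 ≤ B := by simpa using hB 0
  have hhalf : (∫ x, u x) / 2 ≤ 2 * √(A * B) :=
    le_two_mul_sqrt_of_forall_le_mul_add_div hA₀ hB₀ fun t ht ↦ by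
      linarith [integral_le_two_mul_mul_add_div hu hA hB ht]
  linarith

end Split

section Fourier

variable {E : Type*} [NormedAddCommGroup E] [NormedSpace ℂ E]

section InnerProductSpace

variable {V : Type*} [NormedAddCommGroup V] [InnerProductSpace ℝ V] [MeasurableSpace V]
  [BorelSpace V] [FiniteDimensional ℝ V]

theorem norm_fourier_le_integral_norm (f : V → E) (ξ : V) : ‖𝓕 f ξ‖ ≤ ∫ x, ‖f x‖ :=
  VectorFourier.norm_fourierIntegral_le_integral_norm _ _ _ f ξ

theorem continuous_fourier_of_integrable {f : V → E} (hf : Integrable f) : Continuous (𝓕 f) :=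
  VectorFourier.fourierIntegral_continuous continuous_fourierChar (innerSL ℝ).continuous₂ hf

end InnerProductSpace

variable {f f' f'' : ℝ → E}

theorem fourier_deriv_deriv (hd : ∀ x, HasDerivAt f (f' x) x)
    (hd' : ∀ x, HasDerivAt f' (f'' x) x) (hf : Integrable f) (hf'' : Integrable f'') (ξ : ℝ) :
    𝓕 f'' ξ = (2 * π * Complex.I * ξ : ℂ) ^ 2 • 𝓕 f ξ := by
  have hf' : Integrable f' := integrable_deriv_of_integrable_deriv_deriv hd hd' hf hf''
  obtain rfl : deriv f = f' := deriv_eq hd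
  obtain rfl : deriv (deriv f) = f'' := deriv_eq hd'
  simp only [fourier_deriv hf' (fun x ↦ (hd' x).differentiableAt) hf'',
    fourier_deriv hf (fun x ↦ (hd x).differentiableAt) hf', smul_smul, sq]

theorem sq_mul_norm_fourier_le (hd : ∀ x, HasDerivAt f (f' x) x)
    (hd' : ∀ x, HasDerivAt f' (f'' x) x) (hf : Integrable f) (hf'' : Integrable f'') (ξ : ℝ) :
    ξ ^ 2 * ‖𝓕 f ξ‖ ≤ (∫ x, ‖f'' x‖) / (2 * π) ^ 2 := by
  have hnorm : ‖𝓕 f'' ξ‖ = ξ ^ 2 * ‖𝓕 f ξ‖ * (2 * π) ^ 2 := by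
    rw [fourier_deriv_deriv hd hd' hf hf'', norm_smul]
    simp only [norm_pow, norm_mul, Complex.norm_ofNat, Complex.norm_real, Complex.norm_I,
      norm_eq_abs, abs_of_pos pi_pos, mul_pow, sq_abs]
    ring
  rw [le_div_iff₀ (by positivity), ← hnorm]
  exact norm_fourier_le_integral_norm f'' ξ

theorem barron_constant_simple_bound_general (hd : ∀ x, HasDerivAt f (f' x) x)
    (hd' : ∀ x, HasDerivAt f' (f'' x) x) (hf : Integrable f) (hf'' : Integrable f'') :
    Integrable (𝓕 f) ∧
      ∫ ξ, ‖𝓕 f ξ‖ ≤ 2 / π * √((∫ x, ‖f x‖) * ∫ x, ‖f'' x‖) := by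
  have hlow := norm_fourier_le_integral_norm f
  have hhigh := sq_mul_norm_fourier_le hd hd' hf hf''
  have hint : Integrable (𝓕 f) := integrable_of_norm_le_of_sq_mul_norm_le
    (continuous_fourier_of_integrable hf).aestronglyMeasurable hlow hhigh
  refine ⟨hint, ?_⟩
  calc ∫ ξ, ‖𝓕 f ξ‖ ≤ 4 * √((∫ x, ‖f x‖) * ((∫ x, ‖f'' x‖) / (2 * π) ^ 2)) :=
        integral_le_four_mul_sqrt hint.norm (by positivity) hlow hhigh
    _ = 2 / π * √((∫ x, ‖f x‖) * ∫ x, ‖f'' x‖) := by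
        rw [← mul_div_assoc, sqrt_div' _ (by positivity), sqrt_sq (by positivity)]
        ring

end Fourier

theorem FT_eq_fourier (g : ℝ → ℝ) (ω : ℝ) :
    FT g ω = (√(2 * π) : ℂ)⁻¹ * 𝓕 (fun x ↦ (g x : ℂ)) (ω / (2 * π)) := by
  rw [FT, fourier_real_eq_integral_exp_smul]
  congr! 3 with x
  rw [smul_eq_mul, mul_comm]
  congr 2
  push_cast
  field_simp

theorem inv_sqrt_mul_integral_norm_FT (g : ℝ → ℝ) :
    (√(2 * π))⁻¹ * ∫ ω, ‖FT g ω‖ = ∫ ξ, ‖𝓕 (fun x ↦ (g x : ℂ)) ξ‖ := by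
  have hnorm (ω : ℝ) :
      ‖FT g ω‖ = (√(2 * π))⁻¹ * ‖𝓕 (fun x ↦ (g x : ℂ)) (ω / (2 * π))‖ := by
    rw [FT_eq_fourier, norm_mul, norm_inv, Complex.norm_of_nonneg (sqrt_nonneg _)]
  simp_rw [hnorm]
  rw [integral_const_mul, Measure.integral_comp_div (fun ξ ↦ ‖𝓕 (fun x ↦ (g x : ℂ)) ξ‖),
    abs_of_pos two_pi_pos, smul_eq_mul, ← mul_assoc, ← mul_assoc, ← mul_inv,
    mul_self_sqrt two_pi_pos.le, inv_mul_cancel₀ two_pi_pos.ne', one_mul]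

/- The split integral is `4 √(‖h'‖₁ ‖h'''‖₁)` times one factor `1/√(2π)` from `C_h` and one from
`FT`, that is `4 / (2π) = 2 / π`; keeping only one of them gives `4 / √(2π) = 2√2 / √π`. -/
theorem two_div_pi_le_two_mul_sqrt_two_div_sqrt_pi : 2 / π ≤ 2 * √2 / √π := calc
  2 / π ≤ 2 / √π := by
    gcongr
    exact sqrt_le_self_iff.2 (.inr (by linarith [pi_gt_three]))
  _ ≤ 2 * √2 / √π := by
    gcongr
    exact le_mul_of_one_le_right zero_le_two (one_le_sqrt.2 one_le_two)

/-- The simpler Barron-constant bound `C_h ≤ (2√2/√π)·√(‖h'‖₁‖h'''‖₁)`. -/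
theorem barron_constant_simple_bound
    (h h₁ h₂ h₃ : ℝ → ℝ)
    (hd1 : ∀ x, HasDerivAt h (h₁ x) x)
    (hd2 : ∀ x, HasDerivAt h₁ (h₂ x) x)
    (hd3 : ∀ x, HasDerivAt h₂ (h₃ x) x)
    (hi1 : Integrable h₁) (hi3 : Integrable h₃)
    (hv1t : Filter.Tendsto h₁ Filter.atTop (nhds 0))
    (hv1b : Filter.Tendsto h₁ Filter.atBot (nhds 0))
    (hv2t : Filter.Tendsto h₂ Filter.atTop (nhds 0))
    (hv2b : Filter.Tendsto h₂ Filter.atBot (nhds 0))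
    (hFT : Integrable (fun ω => ‖FT h₁ ω‖)) :
    (Real.sqrt (2 * Real.pi))⁻¹ * ∫ ω : ℝ, ‖FT h₁ ω‖ ≤
      (2 * Real.sqrt 2 / Real.sqrt Real.pi) *
        Real.sqrt ((∫ x, |h₁ x|) * (∫ x, |h₃ x|)) := by
  have hbound := (barron_constant_simple_bound_general (fun x ↦ (hd2 x).ofReal_comp)
    (fun x ↦ (hd3 x).ofReal_comp) hi1.ofReal hi3.ofReal).2
  simp only [Complex.norm_real, norm_eq_abs] at hbound
  rw [inv_sqrt_mul_integral_norm_FT]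
  exact hbound.trans
    (mul_le_mul_of_nonneg_right two_div_pi_le_two_mul_sqrt_two_div_sqrt_pi (sqrt_nonneg _))
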